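/- Let a, b ≥ 0 be integers and let f, g ∈ S be homogeneous of degree a+1 with no common zeros along Y; set I_Z = (x², xy, y², xg − yf). Let (p, q) and (p′, q′) be two pairs of homogeneous polynomials of degrees b and 3a+b+2 respectively, each pair having no common zeros along Y, and let u, u′ : I_Z → S/(x,y) be the corresponding S-module homomorphisms with u(x²) = pf², u(xy) = pfg, u(y²) = pg², u(xg−yf) = q (mod (x,y)), and similarly for u′ with (p′,q′). Then ker u = ker u′ if and only if there exists d ∈ k* such that p′ ≡ dp (mod (x,y)) and q′ ≡ dq (mod (x,y)). -/

import Mathlib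

open MvPolynomial

/-- The pair `(f, g)` has no common zeros along the line `Y = {x = y = 0}`. -/
def NoCommonZerosAlongY {k : Type*} [Field k] (f g : MvPolynomial (Fin 4) k) : Prop :=
  ∀ c d : k, (c, d) ≠ (0, 0) → eval ![0, 0, c, d] f ≠ 0 ∨ eval ![0, 0, c, d] g ≠ 0

/-!
If `ker u = ker u'`, then `u m * u' n = u n * u' m` for all `m`, `n` in `I_Z`, since scaling `m` by
a lift of `u n` and `n` by a lift of `u m` gives a difference in `ker u`. Taking `n = xg - yf` and
`m = x²` or `m = y²`, and cancelling `f²` or `g²` in the domain `k[z,w]`, gives `q p' = p q'` on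
`Y`. There the pairs `(p, q)` and `(p', q')` are relatively prime by the Nullstellensatz, so they
differ by a unit of `k[z,w]`, that is, by a nonzero constant `d`. Conversely, `p' ≡ dp` and
`q' ≡ dq` give `u' = d u`.
-/

theorem exists_units_eq_mul_of_mul_eq_mul {M : Type*} [CommMonoidWithZero M] [IsCancelMulZero M]
    [Nontrivial M] [DecompositionMonoid M] {p q p' q' : M} (h : IsRelPrime p q)
    (h' : IsRelPrime p' q') (hcross : q * p' = p * q') :
    ∃ d : Mˣ, p' = d * p ∧ q' = d * q := by
  wlog hp : p ≠ 0 generalizing p q p' q'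
  · have hq : q ≠ 0 := h.ne_zero_or_ne_zero.resolve_left hp
    exact (this h.symm h'.symm hcross.symm hq).imp fun _ ↦ And.symm
  obtain ⟨s, rfl⟩ : p ∣ p' := h.dvd_of_dvd_mul_left (hcross ▸ dvd_mul_right p q')
  obtain rfl : q * s = q' := mul_left_cancel₀ hp (by rw [← hcross, mul_left_comm])
  have hs : IsUnit s := h' (dvd_mul_left s p) (dvd_mul_left s q)
  exact ⟨hs.unit, mul_comm p s, mul_comm q s⟩

theorem mul_apply_eq_mul_apply_of_ker_le_ker {A B M : Type*} [CommRing A] [CommRing B]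
    [Algebra A B] [AddCommGroup M] [Module A M] (hsurj : Function.Surjective (algebraMap A B))
    {u v : M →ₗ[A] B} (hker : LinearMap.ker u ≤ LinearMap.ker v) (m n : M) :
    u m * v n = u n * v m := by
  obtain ⟨r, hr⟩ := hsurj (u m)
  obtain ⟨s, hs⟩ := hsurj (u n)
  have hmem : r • n - s • m ∈ LinearMap.ker u := by
    simp only [LinearMap.mem_ker, map_sub, map_smul, Algebra.smul_def, hr, hs]
    ring
  simpa only [LinearMap.mem_ker, map_sub, map_smul, Algebra.smul_def, hr, hs, sub_eq_zero]
    using hker hmem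

section MvPolynomial

variable {σ τ R : Type*} [CommSemiring R] {e : σ → τ} (he : Function.Injective e)

theorem killCompl_eq_zero_iff_mem_span (r : MvPolynomial τ R) :
    killCompl he r = 0 ↔ r ∈ Ideal.span (X '' (Set.range e)ᶜ) := by
  rw [mem_ideal_span_X_image]
  constructor
  · intro h m hm
    by_contra! hrange
    have hsupp : (m.support : Set τ) ⊆ Set.range e := fun i hi ↦
      not_not.1 fun hi' ↦ Finsupp.mem_support_iff.1 hi (hrange i hi')
    refine mem_support_iff.1 hm ?_
    rw [← m.mapDomain_comapDomain e he hsupp, ← coeff_killCompl he, h, coeff_zero]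
  · intro h
    ext m
    rw [coeff_killCompl, coeff_zero, ← notMem_support_iff]
    intro hm
    obtain ⟨i, hi, hne⟩ := h _ hm
    exact hne (Finsupp.mapDomain_of_notMem_range m i hi)

theorem eval_killCompl (v : σ → R) (r : MvPolynomial τ R) :
    eval v (killCompl he r) = eval (Function.extend e v 0) r := by
  suffices h : (aeval v).comp (killCompl he) = aeval (R := R) (Function.extend e v 0) by
    simpa [aeval_eq_eval] using DFunLike.congr_fun h r
  ext i
  by_cases hi : i ∈ Set.range e
  · obtain ⟨j, rfl⟩ := hi
    simp [killCompl, he.extend_apply]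
  · simp [killCompl, hi, Function.extend_apply' v (0 : τ → R) i hi]

end MvPolynomial

theorem isRelPrime_X_X {σ R : Type*} [CommRing R] [IsDomain R] {i j : σ} (hij : i ≠ j) :
    IsRelPrime (X i : MvPolynomial σ R) (X j) := by
  rwa [(X_prime (R := R)).irreducible.isRelPrime_iff_not_dvd, X_dvd_X]

theorem isUnit_of_forall_eval_eq_zero_imp {σ k : Type*} [Finite σ] [Nontrivial σ] [Field k]
    [IsAlgClosed k] {c : MvPolynomial σ k} (hc : ∀ v, eval v c = 0 → v = 0) : IsUnit c := by
  have dvd_X_pow (i : σ) : ∃ n : ℕ, c ∣ X i ^ n := by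
    have hmem : X i ∈ (Ideal.span {c}).radical := by
      rw [← vanishingIdeal_zeroLocus_eq_radical (K := k), mem_vanishingIdeal_iff]
      intro v hv
      have hv0 : v = 0 := hc v (by simpa [zeroLocus_span, aeval_eq_eval] using hv)
      simp [hv0]
    exact hmem.imp fun _ ↦ Ideal.mem_span_singleton.1
  obtain ⟨i, j, hij⟩ := exists_pair_ne σ
  obtain ⟨m, hm⟩ := dvd_X_pow i
  obtain ⟨n, hn⟩ := dvd_X_pow j
  exact (isRelPrime_X_X hij).pow hm hn

/-- The homogeneous ideal `I_Y = (x, y)` of the line `Y`. -/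
noncomputable abbrev lineIdeal (k : Type*) [CommRing k] : Ideal (MvPolynomial (Fin 4) k) :=
  Ideal.span {X 0, X 1}

/-- The ideal `I_Z = (x², xy, y², xg - yf)` of the double structure on `Y` given by `(f, g)`. -/
noncomputable abbrev doubleLineIdeal {k : Type*} [CommRing k] (f g : MvPolynomial (Fin 4) k) :
    Ideal (MvPolynomial (Fin 4) k) :=
  Ideal.span {X 0 ^ 2, X 0 * X 1, X 1 ^ 2, X 0 * g - X 1 * f}

/-- `u : I_Z → S/I_Y` is the homomorphism corresponding to the pair `(p, q)`: it sends the
generators `x²`, `xy`, `y²`, `xg - yf` to `pf²`, `pfg`, `pg²`, `q`. -/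
structure IsHomOfPair {k : Type*} [CommRing k] {f g : MvPolynomial (Fin 4) k}
    (u : doubleLineIdeal f g →ₗ[MvPolynomial (Fin 4) k] MvPolynomial (Fin 4) k ⧸ lineIdeal k)
    (p q : MvPolynomial (Fin 4) k) : Prop where
  apply_X_zero_sq : u ⟨X 0 ^ 2, Ideal.subset_span (by simp)⟩ = Ideal.Quotient.mk _ (p * f ^ 2)
  apply_X_zero_mul_X_one :
    u ⟨X 0 * X 1, Ideal.subset_span (by simp)⟩ = Ideal.Quotient.mk _ (p * (f * g))
  apply_X_one_sq : u ⟨X 1 ^ 2, Ideal.subset_span (by simp)⟩ = Ideal.Quotient.mk _ (p * g ^ 2)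
  apply_sub : u ⟨X 0 * g - X 1 * f, Ideal.subset_span (by simp)⟩ = Ideal.Quotient.mk _ q

/-- The restriction `k[x,y,z,w] → k[z,w]` of polynomials to the line `Y`. -/
noncomputable def restrictToLine (k : Type*) [CommSemiring k] :
    MvPolynomial (Fin 4) k →ₐ[k] MvPolynomial (Fin 2) k :=
  killCompl (Fin.natAdd_injective 2 2)

theorem restrictToLine_eq_zero_iff {k : Type*} [CommRing k] {r : MvPolynomial (Fin 4) k} :
    restrictToLine k r = 0 ↔ r ∈ lineIdeal k := by
  have hrange : (Set.range (Fin.natAdd 2 : Fin 2 → Fin 4))ᶜ = {0, 1} := by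
    ext i
    fin_cases i <;> simp [Fin.exists_fin_two]
  rw [restrictToLine, killCompl_eq_zero_iff_mem_span, hrange, Set.image_pair]

theorem quotient_mk_lineIdeal_eq_iff {k : Type*} [CommRing k] {r s : MvPolynomial (Fin 4) k} :
    Ideal.Quotient.mk (lineIdeal k) r = Ideal.Quotient.mk (lineIdeal k) s ↔
      restrictToLine k r = restrictToLine k s := by
  rw [Ideal.Quotient.eq, ← restrictToLine_eq_zero_iff, map_sub, sub_eq_zero]

theorem sub_C_mul_mem_lineIdeal_iff {k : Type*} [CommRing k] {d : k}
    {r s : MvPolynomial (Fin 4) k} :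
    s - C d * r ∈ lineIdeal k ↔ restrictToLine k s = C d * restrictToLine k r := by
  have hC : restrictToLine k (C d) = C d := algHom_C _ d
  rw [← restrictToLine_eq_zero_iff, map_sub, map_mul, hC, sub_eq_zero]

theorem eval_restrictToLine {k : Type*} [CommSemiring k] (v : Fin 2 → k)
    (r : MvPolynomial (Fin 4) k) :
    eval v (restrictToLine k r) = eval ![0, 0, v 0, v 1] r := by
  have hextend : Function.extend (Fin.natAdd 2 : Fin 2 → Fin 4) v 0 = ![0, 0, v 0, v 1] := by
    have hinj : Function.Injective (Fin.natAdd 2 : Fin 2 → Fin 4) := Fin.natAdd_injective 2 2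
    ext i
    fin_cases i
    · exact Function.extend_apply' v (0 : Fin 4 → k) 0 (by decide)
    · exact Function.extend_apply' v (0 : Fin 4 → k) 1 (by decide)
    · exact hinj.extend_apply v 0 0
    · exact hinj.extend_apply v 0 1
  rw [restrictToLine, eval_killCompl, hextend]

namespace NoCommonZerosAlongY

variable {k : Type*} [Field k] {p q : MvPolynomial (Fin 4) k}

theorem eq_zero_of_eval_restrictToLine (h : NoCommonZerosAlongY p q) {v : Fin 2 → k}
    (hp : eval v (restrictToLine k p) = 0) (hq : eval v (restrictToLine k q) = 0) : v = 0 := by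
  rw [eval_restrictToLine] at hp hq
  have hv : (v 0, v 1) = (0, 0) := by_contra fun hne ↦ (h _ _ hne).elim (· hp) (· hq)
  ext i
  fin_cases i
  exacts [congrArg Prod.fst hv, congrArg Prod.snd hv]

theorem restrictToLine_ne_zero (h : NoCommonZerosAlongY p q) :
    restrictToLine k p ≠ 0 ∨ restrictToLine k q ≠ 0 := by
  by_contra! h0
  exact one_ne_zero (h.eq_zero_of_eval_restrictToLine (v := 1) (by simp [h0.1]) (by simp [h0.2]))

theorem isRelPrime_restrictToLine [IsAlgClosed k] (h : NoCommonZerosAlongY p q) :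
    IsRelPrime (restrictToLine k p) (restrictToLine k q) := by
  intro c hcp hcq
  refine isUnit_of_forall_eval_eq_zero_imp fun v hv ↦ h.eq_zero_of_eval_restrictToLine ?_ ?_
  · exact zero_dvd_iff.1 (hv ▸ map_dvd (eval v) hcp)
  · exact zero_dvd_iff.1 (hv ▸ map_dvd (eval v) hcq)

end NoCommonZerosAlongY

namespace IsHomOfPair

variable {k : Type*} [CommRing k] {f g p q p' q' : MvPolynomial (Fin 4) k}
  {u u' : doubleLineIdeal f g →ₗ[MvPolynomial (Fin 4) k] MvPolynomial (Fin 4) k ⧸ lineIdeal k}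

theorem eq_smul (hu : IsHomOfPair u p q) (hu' : IsHomOfPair u' p' q')
    {r : MvPolynomial (Fin 4) k} (hp : p' - r * p ∈ lineIdeal k)
    (hq : q' - r * q ∈ lineIdeal k) : u' = r • u := by
  have mk_eq {s s' : MvPolynomial (Fin 4) k} (hs : s' - r * s ∈ lineIdeal k) :
      Ideal.Quotient.mk (lineIdeal k) s' = r • Ideal.Quotient.mk (lineIdeal k) s :=
    Ideal.Quotient.eq.2 hs
  have mk_mul_eq (t : MvPolynomial (Fin 4) k) : Ideal.Quotient.mk (lineIdeal k) (p' * t) =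
      r • Ideal.Quotient.mk (lineIdeal k) (p * t) := by
    rw [map_mul, mk_eq hp, smul_mul_assoc, ← map_mul]
  refine LinearMap.ext_on Submodule.span_span_coe_preimage ?_
  rintro ⟨_, _⟩ (rfl | rfl | rfl | rfl)
  · rw [LinearMap.smul_apply, hu.apply_X_zero_sq, hu'.apply_X_zero_sq, mk_mul_eq]
  · rw [LinearMap.smul_apply, hu.apply_X_zero_mul_X_one, hu'.apply_X_zero_mul_X_one, mk_mul_eq]
  · rw [LinearMap.smul_apply, hu.apply_X_one_sq, hu'.apply_X_one_sq, mk_mul_eq]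
  · rw [LinearMap.smul_apply, hu.apply_sub, hu'.apply_sub, mk_eq hq]

theorem restrictToLine_mul_eq_of_ker_le_ker [IsDomain k] (hu : IsHomOfPair u p q)
    (hu' : IsHomOfPair u' p' q') (hfg : restrictToLine k f ≠ 0 ∨ restrictToLine k g ≠ 0)
    (hker : LinearMap.ker u ≤ LinearMap.ker u') :
    restrictToLine k q * restrictToLine k p' = restrictToLine k p * restrictToLine k q' := by
  have cross_of_apply_eq {t : MvPolynomial (Fin 4) k} (ht : restrictToLine k t ≠ 0)
      {m : doubleLineIdeal f g} (hm : u m = Ideal.Quotient.mk _ (p * t))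
      (hm' : u' m = Ideal.Quotient.mk _ (p' * t)) :
      restrictToLine k q * restrictToLine k p' = restrictToLine k p * restrictToLine k q' := by
    have hcross := mul_apply_eq_mul_apply_of_ker_le_ker Ideal.Quotient.mk_surjective hker m
      ⟨X 0 * g - X 1 * f, Ideal.subset_span (by simp)⟩
    rw [hm, hm', hu.apply_sub, hu'.apply_sub, ← map_mul, ← map_mul,
      quotient_mk_lineIdeal_eq_iff] at hcross
    simp only [map_mul] at hcross
    refine mul_right_cancel₀ ht ?_
    linear_combination -hcross
  rcases hfg with hf | hg
  · exact cross_of_apply_eq (by simpa using hf) hu.apply_X_zero_sq hu'.apply_X_zero_sq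
  · exact cross_of_apply_eq (by simpa using hg) hu.apply_X_one_sq hu'.apply_X_one_sq

end IsHomOfPair

theorem stmt_12_general {k : Type*} [Field k] {f g p q p' q' : MvPolynomial (Fin 4) k}
    (hfg : restrictToLine k f ≠ 0 ∨ restrictToLine k g ≠ 0)
    (hpq : IsRelPrime (restrictToLine k p) (restrictToLine k q))
    (hpq' : IsRelPrime (restrictToLine k p') (restrictToLine k q'))
    {u u' : doubleLineIdeal f g →ₗ[MvPolynomial (Fin 4) k] MvPolynomial (Fin 4) k ⧸ lineIdeal k}
    (hu : IsHomOfPair u p q) (hu' : IsHomOfPair u' p' q') :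
    LinearMap.ker u = LinearMap.ker u' ↔
      ∃ d : k, d ≠ 0 ∧ p' - C d * p ∈ lineIdeal k ∧ q' - C d * q ∈ lineIdeal k := by
  constructor
  · intro hker
    obtain ⟨c, hp, hq⟩ := exists_units_eq_mul_of_mul_eq_mul hpq hpq'
      (hu.restrictToLine_mul_eq_of_ker_le_ker hu' hfg hker.le)
    obtain ⟨d, hd, hcd⟩ := isUnit_iff_eq_C_of_isReduced.1 c.isUnit
    rw [hcd] at hp hq
    exact ⟨d, hd.ne_zero, sub_C_mul_mem_lineIdeal_iff.2 hp, sub_C_mul_mem_lineIdeal_iff.2 hq⟩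
  · rintro ⟨d, hd, hp, hq⟩
    have hunit : IsUnit (C d : MvPolynomial (Fin 4) k) := hd.isUnit.map C
    ext m
    rw [hu.eq_smul hu' hp hq, LinearMap.mem_ker, LinearMap.mem_ker, LinearMap.smul_apply,
      hunit.smul_eq_zero]

/-- for two pairs `(p,q)` and `(p′,q′)` of homogeneous polynomials of
degrees `b, 3a+b+2`, each with no common zeros along `Y`, the corresponding maps
`u, u′ : I_Z → S/(x,y)` have equal kernels iff there exists `d ∈ k*` with
`p′ ≡ dp` and `q′ ≡ dq (mod (x,y))`. -/
theorem stmt_12 {k : Type*} [Field k] [IsAlgClosed k] (a b : ℕ)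
    (f g : MvPolynomial (Fin 4) k)
    (hf : f.IsHomogeneous (a + 1)) (hg : g.IsHomogeneous (a + 1))
    (hfg : NoCommonZerosAlongY f g)
    (p q p' q' : MvPolynomial (Fin 4) k)
    (hp : p.IsHomogeneous b) (hq : q.IsHomogeneous (3 * a + b + 2))
    (hp' : p'.IsHomogeneous b) (hq' : q'.IsHomogeneous (3 * a + b + 2))
    (hpq : NoCommonZerosAlongY p q) (hpq' : NoCommonZerosAlongY p' q')
    (u u' : (Ideal.span {X 0 ^ 2, X 0 * X 1, X 1 ^ 2, X 0 * g - X 1 * f} :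
          Ideal (MvPolynomial (Fin 4) k)) →ₗ[MvPolynomial (Fin 4) k]
        (MvPolynomial (Fin 4) k ⧸ (Ideal.span {X 0, X 1} : Ideal (MvPolynomial (Fin 4) k))))
    (hu1 : u ⟨X 0 ^ 2, Ideal.subset_span (by simp)⟩ = Ideal.Quotient.mk _ (p * f ^ 2))
    (hu2 : u ⟨X 0 * X 1, Ideal.subset_span (by simp)⟩ = Ideal.Quotient.mk _ (p * (f * g)))
    (hu3 : u ⟨X 1 ^ 2, Ideal.subset_span (by simp)⟩ = Ideal.Quotient.mk _ (p * g ^ 2))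
    (hu4 : u ⟨X 0 * g - X 1 * f, Ideal.subset_span (by simp)⟩ = Ideal.Quotient.mk _ q)
    (hu1' : u' ⟨X 0 ^ 2, Ideal.subset_span (by simp)⟩ = Ideal.Quotient.mk _ (p' * f ^ 2))
    (hu2' : u' ⟨X 0 * X 1, Ideal.subset_span (by simp)⟩ = Ideal.Quotient.mk _ (p' * (f * g)))
    (hu3' : u' ⟨X 1 ^ 2, Ideal.subset_span (by simp)⟩ = Ideal.Quotient.mk _ (p' * g ^ 2))
    (hu4' : u' ⟨X 0 * g - X 1 * f, Ideal.subset_span (by simp)⟩ = Ideal.Quotient.mk _ q') :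
    LinearMap.ker u = LinearMap.ker u' ↔
      ∃ d : k, d ≠ 0 ∧
        p' - C d * p ∈ (Ideal.span {X 0, X 1} : Ideal (MvPolynomial (Fin 4) k)) ∧
        q' - C d * q ∈ (Ideal.span {X 0, X 1} : Ideal (MvPolynomial (Fin 4) k)) := by
  exact stmt_12_general hfg.restrictToLine_ne_zero hpq.isRelPrime_restrictToLine
    hpq'.isRelPrime_restrictToLine ⟨hu1, hu2, hu3, hu4⟩ ⟨hu1', hu2', hu3', hu4'⟩
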